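/- Let B₀ be a ring, π a central non-zero-divisor in B₀, B = B₀[π⁻¹], and B̄ = B₀/πB₀. Let M be a finitely generated left B-module and let L₁, L₂ ⊆ M be two lattices (finitely generated B₀-submodules with B·Lᵢ = M). If L₁/πL₁ has finite length as a B̄-module, then so does L₂/πL₂, and the two reductions have isomorphic semisimplifications. -/

import Mathlib

open CategoryTheory Function

/-- Multiplication by a central element `π` as a linear endomorphism of any module. -/
def piSmul (R : Type) [Ring R] (π : R) (hc : ∀ b : R, π * b = b * π)
    (M : Type) [AddCommGroup M] [Module R M] : M →ₗ[R] M where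
  toFun m := π • m
  map_add' := by simp
  map_smul' r m := by
    simp only [RingHom.id_apply]
    rw [← mul_smul, ← mul_smul, hc]

/-- The submodule `πM` of a module `M`. -/
def piRange (R : Type) [Ring R] (π : R) (hc : ∀ b : R, π * b = b * π)
    (M : Type) [AddCommGroup M] [Module R M] : Submodule R M :=
  LinearMap.range (piSmul R π hc M)

/-- `M` admits a filtration `0 = N₀ ≤ N₁ ≤ … ≤ N_nn = M` by submodules whose successive
quotients are isomorphic to the modules `S 0, …, S (nn-1)`. -/
def HasFactors (R : Type) [Ring R] (M : Type) [AddCommGroup M] [Module R M]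
    {nn : ℕ} (S : Fin nn → ModuleCat.{0} R) : Prop :=
  ∃ N : Fin (nn + 1) → Submodule R M, N 0 = ⊥ ∧ N (Fin.last nn) = ⊤ ∧ Monotone N ∧
    ∀ i : Fin nn, Nonempty
      ((↥(N i.succ) ⧸ Submodule.comap (N i.succ).subtype (N i.castSucc)) ≃ₗ[R] S i)

/-- Two finite-length modules have isomorphic semisimplifications: they admit composition
series with the same simple factors, up to permutation and isomorphism. -/
def SameSemisimplification (R : Type) [Ring R]
    (M₁ M₂ : Type) [AddCommGroup M₁] [Module R M₁] [AddCommGroup M₂] [Module R M₂] : Prop :=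
  ∃ (nn : ℕ) (S : Fin nn → ModuleCat.{0} R), (∀ i, IsSimpleModule R (S i)) ∧
    HasFactors R M₁ S ∧ ∃ σ : Equiv.Perm (Fin nn), HasFactors R M₂ (S ∘ σ)

section LatticeReduction

variable {R : Type} [Ring R]

/-- The subquotient `B / A` of two submodules, as an isomorphism class of modules. -/
def subquotientClass {P : Type} [AddCommGroup P] [Module R P] (A B : Submodule R P) :
    Quotient (isIsomorphicSetoid (ModuleCat.{0} R)) :=
  Quotient.mk _ (ModuleCat.of R (↥B ⧸ A.comap B.subtype))

theorem subquotientClass_eq_iff {P Q : Type} [AddCommGroup P] [Module R P] [AddCommGroup Q]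
    [Module R Q] {A B : Submodule R P} {C D : Submodule R Q} :
    subquotientClass A B = subquotientClass C D ↔
      Nonempty ((↥B ⧸ A.comap B.subtype) ≃ₗ[R] (↥D ⧸ C.comap D.subtype)) := by
  refine Quotient.eq.trans ⟨fun ⟨e⟩ ↦ ⟨e.toLinearEquiv⟩, fun ⟨e⟩ ↦ ⟨e.toModuleIso⟩⟩

theorem subquotientClass_map {P Q : Type} [AddCommGroup P] [Module R P] [AddCommGroup Q]
    [Module R Q] (j : Q →ₗ[R] P) (hj : Injective j) (A B : Submodule R Q) :
    subquotientClass (A.map j) (B.map j) = subquotientClass A B := by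
  refine (subquotientClass_eq_iff.2
    ⟨Submodule.Quotient.equiv _ _ (Submodule.equivMapOfInjective j hj B) ?_⟩).symm
  ext ⟨x, hx⟩
  obtain ⟨y, hy, rfl⟩ := hx
  constructor
  · rintro ⟨z, hz, hzy⟩
    exact ⟨z, hz, congrArg Subtype.val hzy⟩
  · rintro ⟨z, hz, hzy⟩
    obtain rfl := hj hzy
    exact ⟨⟨z, hy⟩, hz, rfl⟩

theorem subquotientClass_comap {P Q : Type} [AddCommGroup P] [Module R P] [AddCommGroup Q]
    [Module R Q] (q : Q →ₗ[R] P) (hq : Surjective q) (A B : Submodule R P) :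
    subquotientClass (A.comap q) (B.comap q) = subquotientClass A B := by
  have hsurj : Surjective ((A.comap B.subtype).mkQ ∘ₗ q.restrict (p := B.comap q) (q := B)
      fun _ h ↦ h) := by
    refine (Submodule.mkQ_surjective _).comp ?_
    rintro ⟨y, hy⟩
    obtain ⟨x, rfl⟩ := hq y
    exact ⟨⟨x, hy⟩, rfl⟩
  refine subquotientClass_eq_iff.2
    ⟨(Submodule.quotEquivOfEq _ _ ?_).trans (LinearMap.quotKerEquivOfSurjective _ hsurj)⟩
  rw [LinearMap.ker_comp, Submodule.ker_mkQ]
  rfl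

/-- The submodules of a quotient of `Q`, viewed inside `P` along an embedding `Q → P`. -/
def quotientEmbedding {P Q : Type} [AddCommGroup P] [Module R P] [AddCommGroup Q] [Module R Q]
    (j : Q →ₗ[R] P) (hj : Injective j) (K : Submodule R Q) :
    Submodule R (Q ⧸ K) ↪o Submodule R P :=
  (Submodule.comapMkQOrderEmbedding K).trans
    (OrderEmbedding.ofMapLEIff (Submodule.map j) fun _ _ ↦
      Submodule.map_le_map_iff_of_injective hj _ _)

theorem quotientEmbedding_apply {P Q : Type} [AddCommGroup P] [Module R P] [AddCommGroup Q]
    [Module R Q] (j : Q →ₗ[R] P) (hj : Injective j) (K : Submodule R Q)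
    (N : Submodule R (Q ⧸ K)) :
    quotientEmbedding j hj K N = (N.comap K.mkQ).map j :=
  rfl

theorem ordConnected_range_quotientEmbedding {P Q : Type} [AddCommGroup P] [Module R P]
    [AddCommGroup Q] [Module R Q] (j : Q →ₗ[R] P) (hj : Injective j) (K : Submodule R Q) :
    (Set.range (quotientEmbedding j hj K)).OrdConnected := by
  refine ⟨?_⟩
  rintro _ ⟨A, rfl⟩ _ ⟨B, rfl⟩ C ⟨hA, hB⟩
  refine ⟨(C.comap j).map K.mkQ, ?_⟩
  rw [quotientEmbedding_apply] at hA hB ⊢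
  rw [Submodule.comap_map_mkQ, sup_eq_right.2, Submodule.map_comap_eq, inf_eq_right]
  · exact hB.trans LinearMap.map_le_range
  · rw [Submodule.map_le_iff_le_comap] at hA
    exact le_trans (fun x hx ↦ by simp [(Submodule.Quotient.mk_eq_zero K).2 hx]) hA

/-- A composition series of `Q ⧸ K`, viewed as a chain of submodules of `P`. -/
def embedSeries {P Q : Type} [AddCommGroup P] [Module R P] [AddCommGroup Q] [Module R Q]
    (j : Q →ₗ[R] P) (hj : Injective j) (K : Submodule R Q)
    (s : CompositionSeries (Submodule R (Q ⧸ K))) : CompositionSeries (Submodule R P) where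
  length := s.length
  toFun i := quotientEmbedding j hj K (s i)
  step i := CovBy.image _ (s.step i) (ordConnected_range_quotientEmbedding j hj K)

/-- The isomorphism classes of the factors of a composition series, with multiplicity. -/
noncomputable def seriesFactors {P : Type} [AddCommGroup P] [Module R P]
    (s : CompositionSeries (Submodule R P)) :
    Multiset (Quotient (isIsomorphicSetoid (ModuleCat.{0} R))) :=
  Finset.univ.val.map fun i : Fin s.length ↦ subquotientClass (s i.castSucc) (s i.succ)

theorem seriesFactors_eq_sum {P : Type} [AddCommGroup P] [Module R P]
    (s : CompositionSeries (Submodule R P)) :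
    seriesFactors s = ∑ i : Fin s.length, {subquotientClass (s i.castSucc) (s i.succ)} := by
  rw [Finset.sum, ← Multiset.sum_map_singleton (seriesFactors s), seriesFactors, Multiset.map_map]
  rfl

theorem seriesFactors_embedSeries {P Q : Type} [AddCommGroup P] [Module R P] [AddCommGroup Q]
    [Module R Q] (j : Q →ₗ[R] P) (hj : Injective j) (K : Submodule R Q)
    (s : CompositionSeries (Submodule R (Q ⧸ K))) :
    seriesFactors (embedSeries j hj K s) = seriesFactors s := by
  refine Multiset.map_congr rfl fun i _ ↦ ?_
  exact (subquotientClass_map j hj _ _).trans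
    (subquotientClass_comap _ (Submodule.mkQ_surjective K) _ _)

theorem head_embedSeries {P Q : Type} [AddCommGroup P] [Module R P] [AddCommGroup Q]
    [Module R Q] (j : Q →ₗ[R] P) (hj : Injective j) (K : Submodule R Q)
    {s : CompositionSeries (Submodule R (Q ⧸ K))} (hs : s.head = ⊥) :
    (embedSeries j hj K s).head = K.map j := by
  change quotientEmbedding j hj K s.head = _
  rw [hs, quotientEmbedding_apply, Submodule.comap_bot, Submodule.ker_mkQ]

theorem last_embedSeries {P Q : Type} [AddCommGroup P] [Module R P] [AddCommGroup Q]
    [Module R Q] (j : Q →ₗ[R] P) (hj : Injective j) (K : Submodule R Q)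
    {s : CompositionSeries (Submodule R (Q ⧸ K))} (hs : s.last = ⊤) :
    (embedSeries j hj K s).last = LinearMap.range j := by
  change quotientEmbedding j hj K s.last = _
  rw [hs, quotientEmbedding_apply, Submodule.comap_top, Submodule.map_top]

theorem seriesFactors_smash {P : Type} [AddCommGroup P] [Module R P]
    (s t : CompositionSeries (Submodule R P)) (h : s.last = t.head) :
    seriesFactors (s.smash t h) = seriesFactors s + seriesFactors t := by
  simp only [seriesFactors_eq_sum]
  refine (Fin.sum_univ_add (a := s.length) (b := t.length) _).trans ?_
  congr 1 <;> refine Finset.sum_congr rfl fun i _ ↦ congrArg _ ?_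
  · exact congrArg₂ _ (RelSeries.smash_castAdd h i) (RelSeries.smash_succ_castAdd h i)
  · exact congrArg₂ _ (RelSeries.smash_natAdd h i) (RelSeries.smash_succ_natAdd h i)

theorem seriesFactors_eq_of_equivalent {P : Type} [AddCommGroup P] [Module R P]
    {s t : CompositionSeries (Submodule R P)} (h : s.Equivalent t) :
    seriesFactors s = seriesFactors t := by
  obtain ⟨f, hf⟩ := h
  simp only [seriesFactors_eq_sum]
  rw [← f.sum_comp]
  refine Finset.sum_congr rfl fun i _ ↦ ?_
  rw [subquotientClass_eq_iff.2 ⟨(hf i).linearEquiv⟩]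

theorem exists_equiv_comp_eq_of_map_univ_eq {ι κ α : Type*} [Fintype ι] [Fintype κ] {f : ι → α}
    {k : κ → α} (h : Finset.univ.val.map f = Finset.univ.val.map k) :
    ∃ σ : κ ≃ ι, ∀ i, f (σ i) = k i := by
  classical
  have hcard : ∀ c, Fintype.card {i // k i = c} = Fintype.card {i // f i = c} := fun c ↦ by
    have hcount := congrArg (Multiset.count c) h
    rw [Multiset.count_map, Multiset.count_map] at hcount
    rw [Fintype.card_subtype, Fintype.card_subtype]
    simpa only [eq_comm (a := c)] using! hcount.symm
  exact ⟨Equiv.ofFiberEquiv fun c ↦ Fintype.equivOfCardEq (hcard c), Equiv.ofFiberEquiv_map _⟩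

theorem sameSemisimplification_of_seriesFactors_eq {X Y : Type} [AddCommGroup X] [Module R X]
    [AddCommGroup Y] [Module R Y] {s : CompositionSeries (Submodule R X)}
    {t : CompositionSeries (Submodule R Y)} (hs : s.head = ⊥) (hs' : s.last = ⊤)
    (ht : t.head = ⊥) (ht' : t.last = ⊤) (h : seriesFactors s = seriesFactors t) :
    SameSemisimplification R X Y := by
  obtain ⟨n, f, hf⟩ := s
  obtain ⟨m, k, hk⟩ := t
  obtain rfl : n = m := by simpa [seriesFactors] using congrArg Multiset.card h
  obtain ⟨σ, hσ⟩ := exists_equiv_comp_eq_of_map_univ_eq h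
  have hf' : ∀ i : Fin n, f i.castSucc ⋖ f i.succ := hf
  have hk' : ∀ i : Fin n, k i.castSucc ⋖ k i.succ := hk
  refine ⟨n, fun i ↦ ModuleCat.of R (↥(f i.succ) ⧸ (f i.castSucc).comap (f i.succ).subtype),
    fun i ↦ (covBy_iff_quot_is_simple (hf' i).le).1 (hf' i),
    ⟨f, hs, hs', Fin.monotone_iff_le_succ.2 fun i ↦ (hf' i).le, fun i ↦ ⟨LinearEquiv.refl R _⟩⟩,
    σ, ⟨k, ht, ht', Fin.monotone_iff_le_succ.2 fun i ↦ (hk' i).le,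
      fun i ↦ subquotientClass_eq_iff.1 (hσ i).symm⟩⟩

theorem isFiniteLength_of_range_eq_ker {X Y Z : Type} [AddCommGroup X] [Module R X]
    [AddCommGroup Y] [Module R Y] [AddCommGroup Z] [Module R Z] (f : X →ₗ[R] Y) (g : Y →ₗ[R] Z)
    (h : LinearMap.range f = LinearMap.ker g) (hX : IsFiniteLength R X)
    (hZ : IsFiniteLength R Z) : IsFiniteLength R Y := by
  rw [isFiniteLength_iff_isNoetherian_isArtinian] at hX hZ ⊢
  obtain ⟨_, _⟩ := hX
  obtain ⟨_, _⟩ := hZ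
  exact ⟨isNoetherian_of_range_eq_ker f g h, isArtinian_of_range_eq_ker f g h⟩

theorem isFiniteLength_quotient_map {P : Type} [AddCommGroup P] [Module R P] (p : P →ₗ[R] P)
    {K : Submodule R P} (hp : IsFiniteLength R (P ⧸ LinearMap.range p))
    (hK : IsFiniteLength R (P ⧸ K)) : IsFiniteLength R (P ⧸ K.map p) := by
  refine isFiniteLength_of_range_eq_ker
    (K.mapQ (K.map p) p (Submodule.le_comap_map _ _))
    (Submodule.factor LinearMap.map_le_range) ?_ hK hp
  rw [Submodule.range_mapQ, Submodule.ker_mapQ, Submodule.comap_id]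

theorem isFiniteLength_quotient_range_pow {P : Type} [AddCommGroup P] [Module R P]
    (p : Module.End R P) (hp : IsFiniteLength R (P ⧸ LinearMap.range p)) (n : ℕ) :
    IsFiniteLength R (P ⧸ LinearMap.range (p ^ n)) := by
  induction n with
  | zero =>
    have : Subsingleton (P ⧸ LinearMap.range (p ^ 0)) := by
      rw [pow_zero, Submodule.Quotient.subsingleton_iff]
      exact LinearMap.range_id
    exact .of_subsingleton
  | succ n ih =>
    have h := isFiniteLength_quotient_map p hp ih
    rwa [← LinearMap.range_comp, ← Module.End.mul_eq_comp, ← pow_succ'] at h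

/-- If `πⁿP ⊆ Q ⊆ P` and `P / πP` has finite length, then so does `Q / πQ`, with the same
semisimplification: cancel the factors of `P / Q ≃ πP / πQ` in the two composition series of `P / πQ`
that pass through `πP` and through `Q`. -/
theorem reduction_of_injective {P Q : Type} [AddCommGroup P] [Module R P] [AddCommGroup Q]
    [Module R Q] (π : R) (hc : ∀ b : R, π * b = b * π) (hinj : Injective (piSmul R π hc P))
    (j : Q →ₗ[R] P) (hj : Injective j) (n : ℕ)
    (hn : LinearMap.range ((piSmul R π hc P : Module.End R P) ^ n) ≤ LinearMap.range j)
    (hlen : IsFiniteLength R (P ⧸ piRange R π hc P)) :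
    IsFiniteLength R (Q ⧸ piRange R π hc Q) ∧
      SameSemisimplification R (P ⧸ piRange R π hc P) (Q ⧸ piRange R π hc Q) := by
  have hmap : (piRange R π hc Q).map j = (LinearMap.range j).map (piSmul R π hc P) := by
    rw [piRange, ← LinearMap.range_comp, ← LinearMap.range_comp]
    congr 1
    ext x
    exact map_smul j π x
  have hK : IsFiniteLength R (P ⧸ LinearMap.range j) :=
    (isFiniteLength_quotient_range_pow _ hlen n).of_surjective (Submodule.factor_surjective hn)
  have hQ : IsFiniteLength R (Q ⧸ piRange R π hc Q) := by
    refine (isFiniteLength_quotient_map _ hlen hK).of_injective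
      (f := Submodule.mapQ _ _ j (Submodule.map_le_iff_le_comap.1 hmap.le)) ?_
    rw [← LinearMap.ker_eq_bot, Submodule.ker_mapQ, ← hmap,
      Submodule.comap_map_eq_of_injective hj, Submodule.mkQ_map_self]
  refine ⟨hQ, ?_⟩
  obtain ⟨a, ha, ha'⟩ := isFiniteLength_iff_exists_compositionSeries.1 hlen
  obtain ⟨b, hb, hb'⟩ := isFiniteLength_iff_exists_compositionSeries.1 hQ
  obtain ⟨t, ht, ht'⟩ := isFiniteLength_iff_exists_compositionSeries.1 hK
  have hid : Injective (LinearMap.id : P →ₗ[R] P) := injective_id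
  have h₁ : (embedSeries _ hinj _ t).last = (embedSeries _ hid _ a).head := by
    rw [last_embedSeries _ _ _ ht', head_embedSeries _ _ _ ha, Submodule.map_id, piRange]
  have h₂ : (embedSeries _ hj _ b).last = (embedSeries _ hid _ t).head := by
    rw [last_embedSeries _ _ _ hb', head_embedSeries _ _ _ ht, Submodule.map_id]
  have h := seriesFactors_eq_of_equivalent <| CompositionSeries.jordan_holder
    ((embedSeries _ hinj _ t).smash _ h₁) ((embedSeries _ hj _ b).smash _ h₂)
    (by rw [RelSeries.head_smash, RelSeries.head_smash, head_embedSeries _ _ _ ht,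
      head_embedSeries _ _ _ hb, hmap])
    (by rw [RelSeries.last_smash, RelSeries.last_smash, last_embedSeries _ _ _ ha',
      last_embedSeries _ _ _ ht'])
  simp only [seriesFactors_smash, seriesFactors_embedSeries] at h
  rw [add_comm] at h
  exact sameSemisimplification_of_seriesFactors_eq ha ha' hb hb' (add_right_cancel h)

/-- A finitely generated submodule is moved into a lattice by a power of `π`. -/
theorem exists_le_comap_pow {M : Type} [AddCommGroup M] [Module R M] (p : Module.End R M)
    {L L' : Submodule R M} (hL : L.FG) (hL'p : ∀ m ∈ L', p m ∈ L')
    (hL' : ∀ m : M, ∃ k : ℕ, (p ^ k) m ∈ L') : ∃ k : ℕ, L ≤ L'.comap (p ^ k) := by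
  have hmono : Monotone fun k : ℕ ↦ L'.comap (p ^ k) := by
    refine monotone_nat_of_le_succ fun k m hm ↦ ?_
    rw [Submodule.mem_comap, pow_succ', Module.End.mul_apply]
    exact hL'p _ hm
  obtain ⟨s, rfl⟩ := hL
  choose k hk using hL'
  refine ⟨s.sup k, Submodule.span_le.2 fun m hm ↦ hmono (Finset.le_sup hm) (hk m)⟩

end LatticeReduction

/-- Let `B₀` be a ring, `π ∈ B₀` a central non-zero-divisor,
`B = B₀[π⁻¹]`, `B̄ = B₀/πB₀`.  Let `M` be a finitely generated left `B`-module and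
`L₁, L₂ ⊆ M` two lattices.  If `L₁/πL₁` has finite length then so does `L₂/πL₂`, and the
two reductions have isomorphic semisimplifications.  (Finite length and the
semisimplifications are taken over `B₀`; since both reductions are killed by `π` this is
the same as over `B̄`.) -/
theorem statement4 (B₀ B : Type) [Ring B₀] [Ring B] (π : B₀)
    (hc : ∀ b : B₀, π * b = b * π) (hnz : ∀ a : B₀, π * a = 0 → a = 0)
    (g : B₀ →+* B) (hginj : Injective g) (hu : IsUnit (g π))
    (hgen : ∀ x : B, ∃ (b : B₀) (k : ℕ), x * (g π) ^ k = g b)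
    (M : Type) [AddCommGroup M] [Module B M] [Module.Finite B M]
    [Module B₀ M] (hcompat : ∀ (b : B₀) (m : M), b • m = g b • m)
    (L₁ L₂ : Submodule B₀ M) (hfg₁ : L₁.FG) (hfg₂ : L₂.FG)
    (hlat₁ : ∀ m : M, ∃ k : ℕ, (g π) ^ k • m ∈ L₁)
    (hlat₂ : ∀ m : M, ∃ k : ℕ, (g π) ^ k • m ∈ L₂)
    (hlen : IsFiniteLength B₀ (↥L₁ ⧸ piRange B₀ π hc ↥L₁)) :
    IsFiniteLength B₀ (↥L₂ ⧸ piRange B₀ π hc ↥L₂) ∧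
    SameSemisimplification B₀
      (↥L₁ ⧸ piRange B₀ π hc ↥L₁) (↥L₂ ⧸ piRange B₀ π hc ↥L₂) := by
  set p : Module.End B₀ M := piSmul B₀ π hc M
  have hp : ∀ m, p m = g π • m := hcompat π
  have hpow : ∀ (k : ℕ) (m : M), (p ^ k) m = g π ^ k • m := fun k m ↦ by
    induction k with
    | zero => simp
    | succ k ih => rw [pow_succ', Module.End.mul_apply, ih, hp, pow_succ', mul_smul]
  have hpinj : Injective p := fun x y hxy ↦ by
    rw [hp, hp] at hxy
    exact hu.smul_left_cancel.1 hxy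
  have hppow : ∀ k : ℕ, Injective (p ^ k : Module.End B₀ M) := fun k ↦ by
    rw [Module.End.coe_pow]
    exact hpinj.iterate k
  simp only [← hpow] at hlat₁ hlat₂
  obtain ⟨a, ha⟩ := exists_le_comap_pow p hfg₂ (fun m hm ↦ L₁.smul_mem π hm) hlat₁
  obtain ⟨b, hb⟩ := exists_le_comap_pow p hfg₁ (fun m hm ↦ L₂.smul_mem π hm) hlat₂
  have hcoe : ∀ (k : ℕ) (x : L₁),
      (((piSmul B₀ π hc L₁ : Module.End B₀ L₁) ^ k) x : M) = (p ^ k) x := fun k x ↦ by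
    induction k with
    | zero => simp
    | succ k ih =>
      rw [pow_succ', Module.End.mul_apply, pow_succ', Module.End.mul_apply, ← ih]
      rfl
  refine reduction_of_injective π hc
    (fun x y hxy ↦ Subtype.ext (hpinj (congrArg Subtype.val hxy)))
    ((p ^ a).restrict ha)
    (fun x y hxy ↦ Subtype.ext (hppow a (congrArg Subtype.val hxy))) (a + b) ?_ hlen
  rintro _ ⟨x, rfl⟩
  refine ⟨⟨(p ^ b) x, hb x.2⟩, Subtype.ext ?_⟩
  rw [hcoe, pow_add, Module.End.mul_apply]
  rfl
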